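/- Let 0 < p < 1 and θ > 0, and let (u,v) be a smooth stable solution of the Grushin Lane–Emden system on ℝ^N. Then for every γ ∈ C_c^∞(ℝ^N) one has θp ∫_{ℝ^N} u^{θ−1} γ² dxdy ≤ ∫_{ℝ^N} v^{1−p} |Δ_s γ|² dxdy. -/

import Mathlib

open MeasureTheory Real

noncomputable section

/-- Euclidean norm on `Fin n → ℝ`. -/
def enorm' {n : ℕ} (x : Fin n → ℝ) : ℝ := Real.sqrt (∑ i, (x i) ^ 2)

/-- Points of `ℝ^N = ℝ^{N₁} × ℝ^{N₂}`. -/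
abbrev Pt (N₁ N₂ : ℕ) := (Fin N₁ → ℝ) × (Fin N₂ → ℝ)

variable {N₁ N₂ : ℕ}

/-- Partial derivative in the variable `x i`. -/
def pX (i : Fin N₁) (w : Pt N₁ N₂ → ℝ) (z : Pt N₁ N₂) : ℝ :=
  deriv (fun t => w (Function.update z.1 i t, z.2)) (z.1 i)

/-- Partial derivative in the variable `y j`. -/
def pY (j : Fin N₂) (w : Pt N₁ N₂ → ℝ) (z : Pt N₁ N₂) : ℝ :=
  deriv (fun t => w (z.1, Function.update z.2 j t)) (z.2 j)

/-- Laplacian in the `x`-variables. -/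
def lapX (w : Pt N₁ N₂ → ℝ) (z : Pt N₁ N₂) : ℝ := ∑ i, pX i (pX i w) z

/-- Laplacian in the `y`-variables. -/
def lapY (w : Pt N₁ N₂ → ℝ) (z : Pt N₁ N₂) : ℝ := ∑ j, pY j (pY j w) z

/-- The Grushin operator `Δ_s w = Δ_x w + |x|^{2s} Δ_y w`. -/
def grushinLap (s : ℝ) (w : Pt N₁ N₂ → ℝ) (z : Pt N₁ N₂) : ℝ :=
  lapX w z + (enorm' z.1) ^ (2 * s) * lapY w z

/-- Norm of the Grushin gradient: `|∇_s w| = (|∇_x w|² + |x|^{2s}|∇_y w|²)^{1/2}`. -/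
def grushinGrad (s : ℝ) (w : Pt N₁ N₂ → ℝ) (z : Pt N₁ N₂) : ℝ :=
  Real.sqrt ((∑ i, (pX i w z) ^ 2) + (enorm' z.1) ^ (2 * s) * ∑ j, (pY j w z) ^ 2)

/-- Hilbert–Schmidt norm of the Grushin Hessian `∇_s² w`. -/
def grushinHess (s : ℝ) (w : Pt N₁ N₂ → ℝ) (z : Pt N₁ N₂) : ℝ :=
  Real.sqrt ((∑ i, ∑ j, (pX i (pX j w) z) ^ 2)
    + 2 * (enorm' z.1) ^ (2 * s) * (∑ i, ∑ k, (pX i (pY k w) z) ^ 2)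
    + (enorm' z.1) ^ (4 * s) * ∑ h, ∑ k, (pY h (pY k w) z) ^ 2)

/-- Norm of the gradient in the `x`-variables only. -/
def gradXNorm (w : Pt N₁ N₂ → ℝ) (z : Pt N₁ N₂) : ℝ := Real.sqrt (∑ i, (pX i w z) ^ 2)

/-- Norm of the gradient in the `y`-variables only. -/
def gradYNorm (w : Pt N₁ N₂ → ℝ) (z : Pt N₁ N₂) : ℝ := Real.sqrt (∑ j, (pY j w z) ^ 2)

/-- HS norm of the Hessian in the `x`-variables only. -/
def hessXNorm (w : Pt N₁ N₂ → ℝ) (z : Pt N₁ N₂) : ℝ :=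
  Real.sqrt (∑ i, ∑ j, (pX i (pX j w) z) ^ 2)

/-- HS norm of the Hessian in the `y`-variables only. -/
def hessYNorm (w : Pt N₁ N₂ → ℝ) (z : Pt N₁ N₂) : ℝ :=
  Real.sqrt (∑ h, ∑ k, (pY h (pY k w) z) ^ 2)

/-- `(u,v)` is a smooth positive solution of the Grushin Lane–Emden system
`-Δ_s u = v^p`, `-Δ_s v = u^θ`, `u, v > 0` on `ℝ^N`. -/
def IsLaneEmdenSol (s p θ : ℝ) (u v : Pt N₁ N₂ → ℝ) : Prop :=
  ContDiff ℝ (⊤ : ℕ∞) u ∧ ContDiff ℝ (⊤ : ℕ∞) v ∧ (∀ z, 0 < u z) ∧ (∀ z, 0 < v z) ∧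
  (∀ z, -grushinLap s u z = (v z) ^ p) ∧ (∀ z, -grushinLap s v z = (u z) ^ θ)

/-- Stability of a solution `(u,v)`: there are `η ≥ 0` and smooth positive `ξ, ζ` with
`-Δ_s ξ = p v^{p-1} ζ + η ξ` and `-Δ_s ζ = θ u^{θ-1} ξ + η ζ`. -/
def IsStable (s p θ : ℝ) (u v : Pt N₁ N₂ → ℝ) : Prop :=
  ∃ (η : ℝ) (ξ ζ : Pt N₁ N₂ → ℝ), 0 ≤ η ∧
    ContDiff ℝ (⊤ : ℕ∞) ξ ∧ ContDiff ℝ (⊤ : ℕ∞) ζ ∧ (∀ z, 0 < ξ z) ∧ (∀ z, 0 < ζ z) ∧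
    (∀ z, -grushinLap s ξ z = p * (v z) ^ (p - 1) * ζ z + η * ξ z) ∧
    (∀ z, -grushinLap s ζ z = θ * (u z) ^ (θ - 1) * ξ z + η * ζ z)

section helpers

variable {E : Type*} [NormedAddCommGroup E] [NormedSpace ℝ E]

/-- Directional derivative. -/
def dD (e : E) (w : E → ℝ) (z : E) : ℝ := fderiv ℝ w z e

lemma dD_contDiff (e : E) {w : E → ℝ} (hw : ContDiff ℝ (⊤ : ℕ∞) w) :
    ContDiff ℝ (⊤ : ℕ∞) (dD e w) := by
  have h : ContDiff ℝ (⊤ : ℕ∞) (fderiv ℝ w) := hw.fderiv_right (by simp)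
  exact h.clm_apply contDiff_const

lemma sm_diff {w : E → ℝ} (hw : ContDiff ℝ (⊤ : ℕ∞) w) : Differentiable ℝ w :=
  hw.differentiable (by simp)

lemma dD_mul (e : E) {f g : E → ℝ} (hf : Differentiable ℝ f) (hg : Differentiable ℝ g) :
    dD e (fun z => f z * g z) = fun z => dD e f z * g z + f z * dD e g z := by
  funext z
  have h := ((hf z).hasFDerivAt.mul (hg z).hasFDerivAt).fderiv
  simp only [dD]
  change fderiv ℝ (f * g) z e = _
  rw [h]
  simp
  ring

lemma dD_sub (e : E) {f g : E → ℝ} (hf : Differentiable ℝ f) (hg : Differentiable ℝ g) :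
    dD e (fun z => f z - g z) = fun z => dD e f z - dD e g z := by
  funext z
  have h := ((hf z).hasFDerivAt.sub (hg z).hasFDerivAt).fderiv
  simp only [dD]
  change fderiv ℝ (f - g) z e = _
  rw [h]
  simp

lemma dD_add (e : E) {f g : E → ℝ} (hf : Differentiable ℝ f) (hg : Differentiable ℝ g) :
    dD e (fun z => f z + g z) = fun z => dD e f z + dD e g z := by
  funext z
  have h := ((hf z).hasFDerivAt.add (hg z).hasFDerivAt).fderiv
  simp only [dD]
  change fderiv ℝ (f + g) z e = _
  rw [h]
  simp

lemma dD_dD_mul (e : E) {f g : E → ℝ} (hf : ContDiff ℝ (⊤ : ℕ∞) f) (hg : ContDiff ℝ (⊤ : ℕ∞) g)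
    (z : E) : dD e (dD e (fun z => f z * g z)) z =
      dD e (dD e f) z * g z + 2 * dD e f z * dD e g z + f z * dD e (dD e g) z := by
  have hf1 := dD_contDiff e hf
  have hg1 := dD_contDiff e hg
  rw [dD_mul e (sm_diff hf) (sm_diff hg),
    dD_add e (f := fun z => dD e f z * g z) (g := fun z => f z * dD e g z)
      ((sm_diff hf1).mul (sm_diff hg)) ((sm_diff hf).mul (sm_diff hg1)),
    dD_mul e (sm_diff hf1) (sm_diff hg), dD_mul e (sm_diff hf) (sm_diff hg1)]
  ring

lemma dD_support (e : E) {w : E → ℝ} (hw : HasCompactSupport w) :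
    HasCompactSupport (dD e w) := by
  have h : HasCompactSupport (fderiv ℝ w) := hw.fderiv ℝ
  exact h.comp_left (g := fun L : E →L[ℝ] ℝ => L e) (by simp)

/-- Picone-type pointwise inequality in one direction. -/
lemma dD_picone (e : E) {γ ξ : E → ℝ} (hγ : ContDiff ℝ (⊤ : ℕ∞) γ) (hξ : ContDiff ℝ (⊤ : ℕ∞) ξ)
    (hpos : ∀ z, 0 < ξ z) (z : E) :
    2 * γ z * dD e (dD e γ) z / ξ z - (γ z) ^ 2 * dD e (dD e ξ) z / (ξ z) ^ 2 ≤
      dD e (dD e (fun z => (γ z * γ z) / ξ z)) z := by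
  have hφ : ContDiff ℝ (⊤ : ℕ∞) (fun z => (γ z * γ z) / ξ z) :=
    (hγ.mul hγ).div hξ (fun z => (hpos z).ne')
  set φ : E → ℝ := fun z => (γ z * γ z) / ξ z with hφd
  have hx := hpos z
  have key : (fun z => φ z * ξ z) = fun z => γ z * γ z := by
    funext z
    have := (hpos z).ne'
    simp only [hφd]
    field_simp
  have h1 := congrFun (congrArg (dD e) key) z
  have h2 := congrFun (congrArg (dD e) (congrArg (dD e) key)) z
  rw [dD_mul e (sm_diff hφ) (sm_diff hξ), dD_mul e (sm_diff hγ) (sm_diff hγ)] at h1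
  rw [dD_dD_mul e hφ hξ, dD_dD_mul e hγ hγ] at h2
  have h0 : φ z = γ z * γ z / ξ z := rfl
  simp only [h0] at h1 h2
  generalize dD e (dD e φ) z = φ2 at *
  generalize dD e φ z = φ1 at *
  generalize dD e (dD e ξ) z = ξ2 at *
  generalize dD e ξ z = ξ1 at *
  generalize dD e (dD e γ) z = γ2 at *
  generalize dD e γ z = γ1 at *
  generalize γ z = g at *
  generalize ξ z = x at *
  have e1 : φ1 = 2 * g * γ1 / x - g ^ 2 * ξ1 / x ^ 2 := by
    field_simp
    field_simp at h1
    linarith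
  have e2 : φ2 = 2 * g * γ2 / x - g ^ 2 * ξ2 / x ^ 2 + 2 / x * (γ1 - g * ξ1 / x) ^ 2 := by
    have h3 : φ2 * x = 2 * g * γ2 + 2 * γ1 ^ 2 - 2 * φ1 * ξ1 - g * g / x * ξ2 := by linarith
    rw [e1] at h3
    rw [eq_comm, ← mul_right_cancel_iff_of_pos hx, h3]
    field_simp
    ring
  have : 0 ≤ 2 / x * (γ1 - g * ξ1 / x) ^ 2 := by positivity
  linarith

variable [MeasurableSpace E] [BorelSpace E] [FiniteDimensional ℝ E]

lemma integral_dD_zero {μ : Measure E} [μ.IsAddHaarMeasure] (e : E) {a h : E → ℝ}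
    (ha : Continuous a) (hae : ∀ z (t : ℝ), a (z + t • e) = a z)
    (hh : ContDiff ℝ (⊤ : ℕ∞) h) (hc : HasCompactSupport h) :
    ∫ z, a z * dD e h z ∂μ = 0 := by
  have i1 : Integrable (fun z => a z * h z) μ :=
    (ha.mul hh.continuous).integrable_of_hasCompactSupport hc.mul_left
  have i2 : Integrable (fun z => a z * dD e h z) μ :=
    (ha.mul (dD_contDiff e hh).continuous).integrable_of_hasCompactSupport
      (dD_support e hc).mul_left
  have := integral_bilinear_hasLineDerivAt_right_eq_neg_left_of_integrable (μ := μ)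
    (f := fun z => a z * h z) (f' := fun z => a z * dD e h z) (g := fun _ => (1 : ℝ))
    (g' := fun _ => (0 : ℝ)) (v := e) (B := ContinuousLinearMap.mul ℝ ℝ)
    (by simpa using i2) (by simp) (by simpa using i1)
    (fun z _ => by
      have h1 : HasLineDerivAt ℝ h (dD e h z) z e :=
        ((sm_diff hh) z).hasFDerivAt.hasLineDerivAt e
      unfold HasLineDerivAt at h1 ⊢
      simp only [hae]
      exact h1.const_mul _)
    (fun z _ => by
      unfold HasLineDerivAt
      exact hasDerivAt_const _ _)
  simpa using this

lemma green {μ : Measure E} [μ.IsAddHaarMeasure] (e : E) {a f g : E → ℝ}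
    (ha : Continuous a) (hae : ∀ z (t : ℝ), a (z + t • e) = a z)
    (hf : ContDiff ℝ (⊤ : ℕ∞) f) (hg : ContDiff ℝ (⊤ : ℕ∞) g) (hc : HasCompactSupport g) :
    Integrable (fun z => a z * (dD e (dD e f) z * g z - f z * dD e (dD e g) z)) μ ∧
    ∫ z, a z * (dD e (dD e f) z * g z - f z * dD e (dD e g) z) ∂μ = 0 := by
  have hf1 := dD_contDiff e hf
  have hg1 := dD_contDiff e hg
  have hh : ContDiff ℝ (⊤ : ℕ∞) (fun z => dD e f z * g z - f z * dD e g z) :=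
    (hf1.mul hg).sub (hf.mul hg1)
  have hhc : HasCompactSupport (fun z => dD e f z * g z - f z * dD e g z) := by
    apply HasCompactSupport.sub
    · exact hc.mul_left
    · exact (dD_support e hc).mul_left
  have e1 : dD e (fun z => dD e f z * g z - f z * dD e g z) =
      fun z => dD e (dD e f) z * g z - f z * dD e (dD e g) z := by
    rw [dD_sub e (f := fun z => dD e f z * g z) (g := fun z => f z * dD e g z)
      ((sm_diff hf1).mul (sm_diff hg)) ((sm_diff hf).mul (sm_diff hg1)),
      dD_mul e (sm_diff hf1) (sm_diff hg), dD_mul e (sm_diff hf) (sm_diff hg1)]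
    funext z
    ring
  have i0 := integral_dD_zero (μ := μ) e ha hae hh hhc
  have i2 : Integrable (fun z => a z * dD e (fun z => dD e f z * g z - f z * dD e g z) z) μ :=
    (ha.mul (dD_contDiff e hh).continuous).integrable_of_hasCompactSupport
      (dD_support e hhc).mul_left
  rw [e1] at i0 i2
  exact ⟨i2, i0⟩

end helpers

/-- Coordinate directions. -/
def eX (i : Fin N₁) : Pt N₁ N₂ := (Pi.single i 1, 0)

/-- Coordinate directions. -/
def eY (j : Fin N₂) : Pt N₁ N₂ := (0, Pi.single j 1)

lemma pX_eq (i : Fin N₁) {w : Pt N₁ N₂ → ℝ} (hw : Differentiable ℝ w) :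
    pX i w = dD (eX i) w := by
  funext z
  have h1 : HasDerivAt (fun t => ((Function.update z.1 i t, z.2) : Pt N₁ N₂)) (eX i) (z.1 i) :=
    (hasDerivAt_update z.1 i (z.1 i)).prodMk (hasDerivAt_const _ _)
  have h2 : HasFDerivAt w (fderiv ℝ w z) (Function.update z.1 i (z.1 i), z.2) := by
    simpa using (hw z).hasFDerivAt
  exact (h2.comp_hasDerivAt (z.1 i) h1).deriv

lemma pY_eq (j : Fin N₂) {w : Pt N₁ N₂ → ℝ} (hw : Differentiable ℝ w) :
    pY j w = dD (eY j) w := by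
  funext z
  have h1 : HasDerivAt (fun t => ((z.1, Function.update z.2 j t) : Pt N₁ N₂)) (eY j) (z.2 j) :=
    (hasDerivAt_const _ _).prodMk (hasDerivAt_update z.2 j (z.2 j))
  have h2 : HasFDerivAt w (fderiv ℝ w z) (z.1, Function.update z.2 j (z.2 j)) := by
    simpa using (hw z).hasFDerivAt
  exact (h2.comp_hasDerivAt (z.2 j) h1).deriv

/-- The degenerate weight. -/
def wt (s : ℝ) (z : Pt N₁ N₂) : ℝ := (enorm' z.1) ^ (2 * s)

lemma grushin_eq (s : ℝ) {w : Pt N₁ N₂ → ℝ} (hw : ContDiff ℝ (⊤ : ℕ∞) w) (z : Pt N₁ N₂) :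
    grushinLap s w z = ∑ i, dD (eX i) (dD (eX i) w) z
      + ∑ j, wt s z * dD (eY j) (dD (eY j) w) z := by
  simp only [grushinLap, lapX, lapY, wt, Finset.mul_sum]
  congr 1
  · refine Finset.sum_congr rfl fun i _ => ?_
    rw [pX_eq i (sm_diff hw), pX_eq i (sm_diff (dD_contDiff _ hw))]
  · refine Finset.sum_congr rfl fun j _ => ?_
    rw [pY_eq j (sm_diff hw), pY_eq j (sm_diff (dD_contDiff _ hw))]

lemma wt_cont (s : ℝ) (hs : 0 ≤ s) : Continuous (wt s : Pt N₁ N₂ → ℝ) := by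
  unfold wt enorm'
  refine Continuous.rpow_const ?_ (fun _ => Or.inr (by linarith))
  fun_prop

lemma wt_nonneg (s : ℝ) (z : Pt N₁ N₂) : 0 ≤ wt s z :=
  Real.rpow_nonneg (Real.sqrt_nonneg _) _

lemma grushin_cont (s : ℝ) (hs : 0 ≤ s) {w : Pt N₁ N₂ → ℝ} (hw : ContDiff ℝ (⊤ : ℕ∞) w) :
    Continuous (grushinLap s w) := by
  rw [funext (grushin_eq s hw)]
  refine Continuous.add ?_ ?_
  · exact continuous_finsetSum _ fun i _ => (dD_contDiff _ (dD_contDiff _ hw)).continuous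
  · exact continuous_finsetSum _ fun i _ =>
      (wt_cont s hs).mul (dD_contDiff _ (dD_contDiff _ hw)).continuous

lemma grushin_zero (s : ℝ) {w : Pt N₁ N₂ → ℝ} (hw : ContDiff ℝ (⊤ : ℕ∞) w)
    (z : Pt N₁ N₂) (hz : z ∉ tsupport w) : grushinLap s w z = 0 := by
  have h : ∀ e : Pt N₁ N₂, dD e (dD e w) z = 0 := by
    intro e
    have h1 : tsupport (dD e (dD e w)) ⊆ tsupport w := by
      have aux : ∀ g : Pt N₁ N₂ → ℝ, tsupport (dD e g) ⊆ tsupport g := fun g =>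
        closure_minimal (fun x hx => by
          apply support_fderiv_subset ℝ (f := g)
          intro h0
          exact hx (by simp [dD, h0])) (isClosed_tsupport g)
      exact (aux _).trans (aux _)
    exact image_eq_zero_of_notMem_tsupport fun hh => hz (h1 hh)
  rw [grushin_eq s hw]
  simp [h]

lemma grushin_green (s : ℝ) (hs : 0 ≤ s) {f g : Pt N₁ N₂ → ℝ}
    (hf : ContDiff ℝ (⊤ : ℕ∞) f) (hg : ContDiff ℝ (⊤ : ℕ∞) g) (hc : HasCompactSupport g) :
    ∫ z, (grushinLap s f z * g z - f z * grushinLap s g z) = 0 := by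
  have e1 : ∀ z, grushinLap s f z * g z - f z * grushinLap s g z =
      ∑ i, (1 : ℝ) * (dD (eX i) (dD (eX i) f) z * g z - f z * dD (eX i) (dD (eX i) g) z)
      + ∑ j, wt s z * (dD (eY j) (dD (eY j) f) z * g z - f z * dD (eY j) (dD (eY j) g) z) := by
    intro z
    rw [grushin_eq s hf, grushin_eq s hg]
    simp only [one_mul, mul_sub, Finset.sum_sub_distrib, add_mul, mul_add, Finset.sum_mul,
      Finset.mul_sum]
    have e2 : ∀ j : Fin N₂, f z * (wt s z * dD (eY j) (dD (eY j) g) z) =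
      wt s z * (f z * dD (eY j) (dD (eY j) g) z) := fun j => by ring
    simp only [e2, mul_assoc]
    ring
  haveI : (volume : Measure (Pt N₁ N₂)).IsAddHaarMeasure :=
    Measure.prod.instIsAddHaarMeasure (volume : Measure (Fin N₁ → ℝ))
      (volume : Measure (Fin N₂ → ℝ))
  have gX := fun i : Fin N₁ => green (μ := (volume : Measure (Pt N₁ N₂))) (eX i)
    (a := fun _ => (1 : ℝ)) continuous_const (fun _ _ => rfl) hf hg hc
  have gY := fun j : Fin N₂ => green (μ := (volume : Measure (Pt N₁ N₂))) (eY j)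
    (a := wt s) (wt_cont s hs) (fun _ _ => by simp [wt, eY]) hf hg hc
  simp only [e1]
  rw [integral_add (integrable_finsetSum _ fun i _ => (gX i).1)
    (integrable_finsetSum _ fun j _ => (gY j).1),
    integral_finsetSum _ fun i _ => (gX i).1, integral_finsetSum _ fun j _ => (gY j).1,
    Finset.sum_eq_zero fun i _ => (gX i).2, Finset.sum_eq_zero fun j _ => (gY j).2, add_zero]

lemma grushin_picone (s : ℝ) {γ ξ : Pt N₁ N₂ → ℝ} (hγ : ContDiff ℝ (⊤ : ℕ∞) γ)
    (hξ : ContDiff ℝ (⊤ : ℕ∞) ξ) (hpos : ∀ z, 0 < ξ z) (z : Pt N₁ N₂) :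
    2 * γ z * grushinLap s γ z / ξ z - (γ z) ^ 2 * grushinLap s ξ z / (ξ z) ^ 2 ≤
      grushinLap s (fun z => (γ z * γ z) / ξ z) z := by
  have hφ : ContDiff ℝ (⊤ : ℕ∞) (fun z => (γ z * γ z) / ξ z) :=
    (hγ.mul hγ).div hξ (fun z => (hpos z).ne')
  have hX := Finset.sum_le_sum fun (i : Fin N₁) (_ : i ∈ Finset.univ) =>
    dD_picone (eX i) hγ hξ hpos z
  have hY := Finset.sum_le_sum fun (j : Fin N₂) (_ : j ∈ Finset.univ) =>
    mul_le_mul_of_nonneg_left (dD_picone (eY j) hγ hξ hpos z) (wt_nonneg s z)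
  rw [grushin_eq s hγ, grushin_eq s hξ, grushin_eq s hφ]
  refine le_trans (le_of_eq ?_) (add_le_add hX hY)
  simp only [mul_add, add_div, Finset.mul_sum, Finset.sum_div, mul_sub, Finset.sum_sub_distrib]
  have e1 : ∀ j : Fin N₂, 2 * γ z * (wt s z * dD (eY j) (dD (eY j) γ) z) / ξ z =
      wt s z * (2 * γ z * dD (eY j) (dD (eY j) γ) z / ξ z) := fun j => by ring
  have e2 : ∀ j : Fin N₂, γ z ^ 2 * (wt s z * dD (eY j) (dD (eY j) ξ) z) / ξ z ^ 2 =
      wt s z * (γ z ^ 2 * dD (eY j) (dD (eY j) ξ) z / ξ z ^ 2) := fun j => by ring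
  simp only [e1, e2]
  ring

/-- stability inequality
`θp ∫ u^{θ-1} γ² ≤ ∫ v^{1-p} |Δ_s γ|²` for all `γ ∈ C_c^∞(ℝ^N)`. -/
theorem stability_inequality (N₁ N₂ : ℕ) (hN₁ : 1 ≤ N₁) (hN₂ : 1 ≤ N₂)
    (s p θ : ℝ) (hs : 0 ≤ s) (hp0 : 0 < p) (hp1 : p < 1) (hθ : 0 < θ)
    (u v : Pt N₁ N₂ → ℝ) (hsol : IsLaneEmdenSol s p θ u v) (hstab : IsStable s p θ u v)
    (γ : Pt N₁ N₂ → ℝ) (hγ : ContDiff ℝ (⊤ : ℕ∞) γ) (hγc : HasCompactSupport γ) :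
    θ * p * ∫ z, (u z) ^ (θ - 1) * (γ z) ^ 2 ≤
      ∫ z, (v z) ^ (1 - p) * |grushinLap s γ z| ^ 2 := by
  obtain ⟨hu, hv, hu0, hv0, -, -⟩ := hsol
  obtain ⟨η, ξ, ζ, hη, hξ, hζ, hξ0, hζ0, h1, h2⟩ := hstab
  have hφ : ContDiff ℝ (⊤ : ℕ∞) (fun z => (γ z * γ z) / ξ z) :=
    (hγ.mul hγ).div hξ (fun z => (hξ0 z).ne')
  have hφc : HasCompactSupport (fun z => (γ z * γ z) / ξ z) := by
    have : (fun z => (γ z * γ z) / ξ z) = fun z => (γ z / ξ z) * γ z := by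
      funext z; ring
    rw [this]
    exact hγc.mul_left
  have hG := grushin_green s hs hζ hφ hφc
  set φ : Pt N₁ N₂ → ℝ := fun z => (γ z * γ z) / ξ z with hφd
  have hLφ : HasCompactSupport (grushinLap s φ) :=
    HasCompactSupport.intro hφc fun z hz => grushin_zero s hφ z hz
  have hLγ : HasCompactSupport (grushinLap s γ) :=
    HasCompactSupport.intro hγc fun z hz => grushin_zero s hγ z hz
  have iG : Integrable (fun z => grushinLap s ζ z * φ z - ζ z * grushinLap s φ z) := by
    refine Integrable.sub ?_ ?_
    · exact ((grushin_cont s hs hζ).mul hφ.continuous).integrable_of_hasCompactSupport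
        hφc.mul_left
    · exact (hζ.continuous.mul (grushin_cont s hs hφ)).integrable_of_hasCompactSupport
        hLφ.mul_left
  have iL : Integrable (fun z => (u z) ^ (θ - 1) * (γ z) ^ 2) := by
    have hc : Continuous (fun z => (u z) ^ (θ - 1) * (γ z) ^ 2) :=
      (hu.continuous.rpow_const fun z => Or.inl (hu0 z).ne').mul (hγ.continuous.pow 2)
    refine hc.integrable_of_hasCompactSupport ?_
    exact (hγc.comp_left (g := fun t : ℝ => t ^ 2) (by simp)).mul_left
  have iR : Integrable (fun z => (v z) ^ (1 - p) * |grushinLap s γ z| ^ 2) := by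
    have hc : Continuous (fun z => (v z) ^ (1 - p) * |grushinLap s γ z| ^ 2) :=
      (hv.continuous.rpow_const fun z => Or.inl (hv0 z).ne').mul
        ((grushin_cont s hs hγ).abs.pow 2)
    refine hc.integrable_of_hasCompactSupport ?_
    exact (hLγ.comp_left (g := fun t : ℝ => |t| ^ 2) (by simp)).mul_left
  have key : ∀ z, θ * p * ((u z) ^ (θ - 1) * (γ z) ^ 2)
      + p * (grushinLap s ζ z * φ z - ζ z * grushinLap s φ z) ≤
        (v z) ^ (1 - p) * |grushinLap s γ z| ^ 2 := by
    intro z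
    have hpic := grushin_picone s hγ hξ hξ0 z
    have hx := hξ0 z
    have hy := hζ0 z
    have hz1 := h1 z
    have hz2 := h2 z
    have hV : 0 < (v z) ^ (1 - p) := Real.rpow_pos_of_pos (hv0 z) _
    have hVinv : (v z) ^ (p - 1) = ((v z) ^ (1 - p))⁻¹ := by
      rw [← Real.rpow_neg (hv0 z).le]; congr 1; ring
    have hφz : φ z = γ z * γ z / ξ z := rfl
    rw [hVinv] at hz1
    rw [sq_abs, hφz]
    change _ ≤ grushinLap s φ z at hpic
    generalize grushinLap s φ z = Lφ at *
    generalize grushinLap s γ z = Lγ at *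
    generalize grushinLap s ξ z = Lξ at *
    generalize grushinLap s ζ z = Lζ at *
    generalize (v z) ^ (1 - p) = V at *
    generalize (u z) ^ (θ - 1) = U at *
    generalize ξ z = x at *
    generalize ζ z = y at *
    generalize γ z = g at *
    have a1 : Lζ = -(θ * U * x + η * y) := by linarith
    have a2 : Lξ = -(p * V⁻¹ * y + η * x) := by linarith
    have a3 : y * (2 * g * Lγ / x - g ^ 2 * Lξ / x ^ 2) ≤ y * Lφ :=
      mul_le_mul_of_nonneg_left hpic hy.le
    have a4 : θ * p * (U * g ^ 2) + p * (Lζ * (g * g / x)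
        - y * (2 * g * Lγ / x - g ^ 2 * Lξ / x ^ 2)) =
        V * Lγ ^ 2 - V * (Lγ + p * V⁻¹ * y * g / x) ^ 2 - 2 * p * η * y * g ^ 2 / x := by
      rw [a1, a2]
      field_simp
      ring
    have a5 : 0 ≤ V * (Lγ + p * V⁻¹ * y * g / x) ^ 2 := by positivity
    have a6 : 0 ≤ 2 * p * η * y * g ^ 2 / x := by positivity
    have a7 := mul_le_mul_of_nonneg_left a3 hp0.le
    linarith
  have hint := integral_mono ((iL.const_mul (θ * p)).add (iG.const_mul p)) iR key
  rw [integral_add' (iL.const_mul (θ * p)) (iG.const_mul p), integral_const_mul,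
    integral_const_mul, hG] at hint
  linarith

end
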